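/- Let A, B ∈ D^k(H). Then A and B are Poisson equivalent and δ_P(A, B) = ln max{ ‖C_A C_B^{-1}‖, ‖C_B C_A^{-1}‖ }. -/

import Mathlib

open ContinuousLinearMap

noncomputable section

/-- `ℓ²(ℕ^k; H)`. -/
abbrev L2 (k : ℕ) (H : Type*) [NormedAddCommGroup H] : Type _ :=
  lp (fun _ : Fin k → ℕ => H) 2

variable {k : ℕ} {H : Type*} [NormedAddCommGroup H] [InnerProductSpace ℂ H] [CompleteSpace H]

/-- The Loewner (operator) order: `S ≤ T` iff `T - S` is a positive operator. -/
def opLE {E : Type*} [NormedAddCommGroup E] [InnerProductSpace ℂ E] [CompleteSpace E]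
    (S T : E →L[ℂ] E) : Prop := (T - S).IsPositive

/-- The defect operator `Δ_X(I) = (id - Φ_{X_1}) ∘ ⋯ ∘ (id - Φ_{X_k})(I)`,
where `Φ_{X_i}(Y) = X_i Y X_i*`. -/
def defect (X : Fin k → (H →L[ℂ] H)) : H →L[ℂ] H :=
  ((List.ofFn fun i => fun Y : H →L[ℂ] H => Y - X i * Y * adjoint (X i)).foldr (· ∘ ·) id) 1

/-- Membership in the regular polydisk `D^k(H)`: pairwise commuting operators of norm `< 1`
with positive invertible defect operator. -/
def memPolydisk (X : Fin k → (H →L[ℂ] H)) : Prop :=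
  (∀ i j, Commute (X i) (X j)) ∧ (∀ i, ‖X i‖ < 1) ∧
    (defect X).IsPositive ∧ IsUnit (defect X)

/-- Membership in the closed regular polydisk `D^k(H)⁻`: pairwise commuting contractions `X`
with `rX ∈ D^k(H)` for all `r ∈ (0,1)`. -/
def memClosedPolydisk (X : Fin k → (H →L[ℂ] H)) : Prop :=
  (∀ i j, Commute (X i) (X j)) ∧ (∀ i, ‖X i‖ ≤ 1) ∧
    ∀ r ∈ Set.Ioo (0 : ℝ) 1, memPolydisk (fun i => ((r : ℂ) • X i))

/-- `P` is the pluriharmonic Poisson kernel `𝒫(R, rX)` on `ℓ²(ℕ^k; H)`: it is characterized by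
`⟨𝒫(R,rX)(δ_β h), δ_α ℓ⟩ = r^{Σ|α_i - β_i|} ⟨(∏ X_i^{(β_i-α_i)⁺})(∏ (X_i*)^{(α_i-β_i)⁺}) h, ℓ⟩`. -/
def IsPoissonKernel (X : Fin k → (H →L[ℂ] H)) (r : ℝ)
    (P : L2 k H →L[ℂ] L2 k H) : Prop :=
  ∀ (α β : Fin k → ℕ) (h ℓ : H),
    inner (𝕜 := ℂ) (P (lp.single 2 β h)) (lp.single 2 α ℓ) =
      ((r ^ (∑ i, ((α i - β i) + (β i - α i))) : ℝ) : ℂ) *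
        inner (𝕜 := ℂ)
          (((List.ofFn fun i => X i ^ (β i - α i)).prod *
            (List.ofFn fun i => (adjoint (X i)) ^ (α i - β i)).prod) h) ℓ

/-- The two-sided Harnack-type domination `c⁻² 𝒫(R,rB) ≤ 𝒫(R,rA) ≤ c² 𝒫(R,rB)` for all
`r ∈ [0,1)`, expressed in terms of the Poisson kernel families. -/
def PoissonSandwich (PA PB : ℝ → (L2 k H →L[ℂ] L2 k H)) (c : ℝ) : Prop :=
  ∀ r ∈ Set.Ico (0 : ℝ) 1,
    opLE (((c : ℂ) ^ 2)⁻¹ • PB r) (PA r) ∧ opLE (PA r) (((c : ℂ) ^ 2) • PB r)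

/-- Poisson equivalence of two points, expressed via their Poisson kernel families. -/
def PoissonEquiv (PA PB : ℝ → (L2 k H →L[ℂ] L2 k H)) : Prop :=
  ∃ c : ℝ, 1 ≤ c ∧ PoissonSandwich PA PB c

/-- The Poisson distance `δ_P`, expressed via the Poisson kernel families. -/
def deltaP (PA PB : ℝ → (L2 k H →L[ℂ] L2 k H)) : ℝ :=
  Real.log (sInf {c : ℝ | 1 ≤ c ∧ PoissonSandwich PA PB c})

/-!
Let `W = ∏ᵢ (1 - Λᵢ(Xᵢ*))`. Conjugation `S ↦ W* S W` applies one difference operator per variable to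
the block entries of `S`, and sends the Poisson kernel at `r = 1` to `I ⊗ Δ_X(I)`. Since `‖Xᵢ‖ < 1`,
these differences are injective on bounded kernels, so `C_X* C_X` is the Poisson kernel at `r = 1`.

Passing from `1` to `r` multiplies the block entries by `∏ᵢ r^|αᵢ - βᵢ|`, which is a positive
semidefinite kernel because `r^|a - b| = r^a r^b + (1 - r²) ∑_{1 ≤ j ≤ min a b} r^(a-j) r^(b-j)`.
Hence domination of the Poisson kernels for all `r < 1` is equivalent to domination at `r = 1`, that
is, to `C_A* C_A ≤ c² C_B* C_B`, which says that `‖C_A C_B⁻¹‖ ≤ c`.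
-/

open Filter Topology
open scoped ComplexOrder lp

section Monomial

variable {M : Type*} [Monoid M] {n : ℕ}

/-- The ordered monomial `x₁^{u₁} ⋯ xₙ^{uₙ}`, in the `List.ofFn` form in which it occurs in
`IsPoissonKernel`. -/
def multiPow (x : Fin n → M) (u : Fin n → ℕ) : M :=
  (List.ofFn fun i => x i ^ u i).prod

theorem multiPow_zero (x : Fin n → M) : multiPow x 0 = 1 := by
  simp [multiPow]

theorem multiPow_add_single : ∀ {n : ℕ} {x : Fin n → M}, (∀ i j, Commute (x i) (x j)) →
    ∀ (u : Fin n → ℕ) (i : Fin n), multiPow x (u + Pi.single i 1) = x i * multiPow x u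
  | 0, _, _, _, i => i.elim0
  | n + 1, x, hx, u, i => by
    refine Fin.cases ?_ (fun j => ?_) i
    · simp [multiPow, List.ofFn_succ, pow_succ', mul_assoc]
    · have ih := multiPow_add_single (x := fun i => x i.succ) (fun _ _ => hx _ _)
        (fun i => u i.succ) j
      have tail : ∀ i : Fin n, (u + Pi.single j.succ 1 : Fin (n + 1) → ℕ) i.succ =
          ((fun i => u i.succ) + Pi.single j 1 : Fin n → ℕ) i := by
        intro i; simp [Pi.single_apply]
      have head : (u + Pi.single j.succ 1 : Fin (n + 1) → ℕ) 0 = u 0 := by simp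
      simp only [multiPow, List.ofFn_succ, List.prod_cons, tail, head] at ih ⊢
      rw [ih, ← mul_assoc, ((hx 0 j.succ).pow_left _).eq, mul_assoc]

theorem commute_multiPow {x : Fin n → M} (hx : ∀ i j, Commute (x i) (x j)) (i : Fin n)
    (u : Fin n → ℕ) : Commute (x i) (multiPow x u) := by
  refine Commute.list_prod_right _ _ fun y hy => ?_
  obtain ⟨j, rfl⟩ := (List.mem_ofFn' _ _).1 hy
  exact (hx i j).pow_right _

end Monomial

theorem norm_multiPow_le_one {A : Type*} [SeminormedRing A] (h1 : ‖(1 : A)‖ ≤ 1) {n : ℕ}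
    {x : Fin n → A} (hx : ∀ i, ‖x i‖ ≤ 1) (u : Fin n → ℕ) : ‖multiPow x u‖ ≤ 1 := by
  let contractions : Submonoid A :=
    { carrier := {a | ‖a‖ ≤ 1}
      one_mem' := h1
      mul_mem' := fun ha hb => (norm_mul_le _ _).trans (mul_le_one₀ ha (norm_nonneg _) hb) }
  refine contractions.list_prod_mem fun y hy => ?_
  obtain ⟨j, rfl⟩ := (List.mem_ofFn' _ _).1 hy
  exact contractions.pow_mem (hx j) _

section KernelDiff

variable {ι A : Type*}

/-- The difference operator on `A`-valued kernels which turns the block entries of `S` into those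
of `(1 - L)* S (1 - L)`, where `L` is the weighted shift `δ_β h ↦ δ_{τ β} (b h)` and `a = b*`. -/
def kernelDiff [Ring A] (a b : A) (τ : ι → ι) (K : ι → ι → A) (α β : ι) : A :=
  K α β - a * K (τ α) β - (K α (τ β) - a * K (τ α) (τ β)) * b

theorem kernelDiff_sub [Ring A] (a b : A) (τ : ι → ι) (K K' : ι → ι → A) :
    kernelDiff a b τ (K - K') = kernelDiff a b τ K - kernelDiff a b τ K' := by
  ext α β
  simp only [kernelDiff, Pi.sub_apply, mul_sub, sub_mul]
  abel

theorem eq_zero_of_norm_le_mul_norm_comp {E : Type*} [NormedAddCommGroup E] {f : ι → E}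
    {τ : ι → ι} {c C : ℝ} (hc0 : 0 ≤ c) (hc1 : c < 1) (hC : ∀ α, ‖f α‖ ≤ C)
    (hf : ∀ α, ‖f α‖ ≤ c * ‖f (τ α)‖) : f = 0 := by
  have iterate (n : ℕ) : ∀ α, ‖f α‖ ≤ c ^ n * C := by
    induction n with
    | zero => simpa using hC
    | succ n ih =>
      intro α
      calc ‖f α‖ ≤ c * ‖f (τ α)‖ := hf α
        _ ≤ c * (c ^ n * C) := by gcongr; exact ih _
        _ = c ^ (n + 1) * C := by ring
  ext α
  have lim : Tendsto (fun n : ℕ => c ^ n * C) atTop (𝓝 0) := by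
    simpa using (tendsto_pow_atTop_nhds_zero_of_lt_one hc0 hc1).mul_const C
  exact norm_le_zero_iff.1 (ge_of_tendsto' lim fun n => iterate n α)

theorem eq_zero_of_kernelDiff_eq_zero [NormedRing A] {a b : A} (ha : ‖a‖ < 1) (hb : ‖b‖ < 1)
    {τ : ι → ι} {K : ι → ι → A} {C : ℝ} (hK : ∀ α β, ‖K α β‖ ≤ C)
    (h : kernelDiff a b τ K = 0) : K = 0 := by
  have left_diff (α : ι) : (fun β => K α β - a * K (τ α) β) = 0 := by
    refine eq_zero_of_norm_le_mul_norm_comp (τ := τ) (C := C + ‖a‖ * C) (norm_nonneg b) hb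
      (fun β => ?_) fun β => ?_
    · refine (norm_sub_le _ _).trans (add_le_add (hK α β) ((norm_mul_le _ _).trans ?_))
      gcongr
      exact hK _ β
    · rw [sub_eq_zero.1 (congrFun₂ h α β), mul_comm]
      exact norm_mul_le _ _
  ext α β
  refine congrFun (eq_zero_of_norm_le_mul_norm_comp (τ := τ) (f := fun α => K α β)
    (norm_nonneg a) ha (fun α => hK α β) fun α => ?_) α
  rw [sub_eq_zero.1 (congrFun (left_diff α) β)]
  exact norm_mul_le _ _

theorem eq_of_kernelDiff_eq [NormedRing A] {a b : A} (ha : ‖a‖ < 1) (hb : ‖b‖ < 1)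
    {τ : ι → ι} {K K' : ι → ι → A} {C C' : ℝ} (hK : ∀ α β, ‖K α β‖ ≤ C)
    (hK' : ∀ α β, ‖K' α β‖ ≤ C') (h : kernelDiff a b τ K = kernelDiff a b τ K') : K = K' := by
  refine sub_eq_zero.1 (eq_zero_of_kernelDiff_eq_zero ha hb (τ := τ) (C := C + C')
    (fun α β => (norm_sub_le _ _).trans (add_le_add (hK α β) (hK' α β))) ?_)
  rw [kernelDiff_sub, h, sub_self]

end KernelDiff

section DefectKernel

variable {A : Type*} [Ring A] {n : ℕ} (x y : Fin n → A)

/-- `(id - Φ_{i₁}) ∘ ⋯ ∘ (id - Φ_{iₘ})(1)` for `l = [i₁, …, iₘ]`, where `Φ_i d = x_i d y_i`. -/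
def partialDefect (l : List (Fin n)) : A :=
  l.foldr (fun i d => d - x i * d * y i) 1

/-- The kernel obtained from the Poisson kernel `x^{(β-α)⁺} y^{(α-β)⁺}` by the differences in the
variables listed in `l`: it lives on the pairs which agree in these variables. -/
def defectKernel (l : List (Fin n)) (α β : Fin n → ℕ) : A :=
  if ∀ j ∈ l, α j = β j then multiPow x (β - α) * partialDefect x y l * multiPow y (α - β) else 0

theorem defectKernel_nil (α β : Fin n → ℕ) :
    defectKernel x y [] α β = multiPow x (β - α) * multiPow y (α - β) := by
  simp [defectKernel, partialDefect]

theorem defectKernel_finRange (α β : Fin n → ℕ) :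
    defectKernel x y (List.finRange n) α β =
      if α = β then partialDefect x y (List.finRange n) else 0 := by
  have agree : (∀ j ∈ List.finRange n, α j = β j) ↔ α = β := by simp [funext_iff]
  rw [defectKernel, if_congr agree rfl rfl]
  split_ifs with h
  · simp [h, multiPow_zero]
  · rfl

variable {x y} {l : List (Fin n)} {i : Fin n} {α β : Fin n → ℕ}

theorem defectKernel_add_add (γ : Fin n → ℕ) :
    defectKernel x y l (α + γ) (β + γ) = defectKernel x y l α β := by
  simp [defectKernel, add_tsub_add_eq_tsub_right]

theorem tsub_eq_tsub_add_single_add_single (h : α i < β i) :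
    β - α = β - (α + Pi.single i 1) + Pi.single i 1 := by
  ext j
  obtain rfl | hj := eq_or_ne j i
  · simp only [Pi.sub_apply, Pi.add_apply, Pi.single_eq_same]; omega
  · simp [hj]

theorem add_single_tsub_eq_tsub (h : α i < β i) : α + Pi.single i 1 - β = α - β := by
  ext j
  obtain rfl | hj := eq_or_ne j i
  · simp only [Pi.sub_apply, Pi.add_apply, Pi.single_eq_same]; omega
  · simp [hj]

theorem forall_mem_add_single_eq_iff (hi : i ∉ l) :
    (∀ j ∈ l, (α + Pi.single i 1 : Fin n → ℕ) j = β j) ↔ ∀ j ∈ l, α j = β j :=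
  forall₂_congr fun j hj => by simp [ne_of_mem_of_not_mem hj hi]

theorem defectKernel_of_lt (hx : ∀ i j, Commute (x i) (x j)) (hi : i ∉ l) (h : α i < β i) :
    defectKernel x y l α β = x i * defectKernel x y l (α + Pi.single i 1) β := by
  rw [defectKernel, defectKernel, mul_ite, mul_zero, add_single_tsub_eq_tsub h,
    if_congr (forall_mem_add_single_eq_iff hi) rfl rfl, tsub_eq_tsub_add_single_add_single h,
    multiPow_add_single hx]
  simp only [mul_assoc]

theorem defectKernel_of_gt (hy : ∀ i j, Commute (y i) (y j)) (hi : i ∉ l) (h : β i < α i) :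
    defectKernel x y l α β = defectKernel x y l α (β + Pi.single i 1) * y i := by
  have agree : (∀ j ∈ l, α j = (β + Pi.single i 1 : Fin n → ℕ) j) ↔ ∀ j ∈ l, α j = β j := by
    simpa only [eq_comm] using forall_mem_add_single_eq_iff (α := β) (β := α) hi
  rw [defectKernel, defectKernel, ite_mul, zero_mul, add_single_tsub_eq_tsub h,
    if_congr agree rfl rfl, tsub_eq_tsub_add_single_add_single h, multiPow_add_single hy,
    (commute_multiPow hy i _).eq]
  simp only [mul_assoc]

theorem defectKernel_cons (hx : ∀ i j, Commute (x i) (x j)) (hy : ∀ i j, Commute (y i) (y j)) :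
    defectKernel x y (i :: l) α β =
      if α i = β i then defectKernel x y l α β - x i * defectKernel x y l α β * y i else 0 := by
  have pull_out (d : A) : multiPow x (β - α) * (x i * d * y i) * multiPow y (α - β) =
      x i * (multiPow x (β - α) * d * multiPow y (α - β)) * y i := by
    simp only [← mul_assoc, (commute_multiPow hx i _).eq]
    simp only [mul_assoc, (commute_multiPow hy i _).eq]
  simp only [defectKernel, List.forall_mem_cons, ite_and, partialDefect, List.foldr_cons]
  split_ifs
  · rw [mul_sub, sub_mul, pull_out]
  · simp
  · rfl

theorem kernelDiff_defectKernel (hx : ∀ i j, Commute (x i) (x j))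
    (hy : ∀ i j, Commute (y i) (y j)) (hi : i ∉ l) :
    kernelDiff (x i) (y i) (· + Pi.single i 1) (defectKernel x y l) =
      defectKernel x y (i :: l) := by
  have lt_shift (γ : Fin n → ℕ) : γ i < (γ + Pi.single i 1 : Fin n → ℕ) i := by simp
  ext α β
  rw [defectKernel_cons hx hy, kernelDiff]
  obtain h | h | h := lt_trichotomy (α i) (β i)
  · rw [if_neg h.ne, ← defectKernel_of_lt hx hi h,
      ← defectKernel_of_lt hx hi (h.trans (lt_shift β))]
    simp
  · rw [if_pos h, ← defectKernel_of_lt hx hi (h.trans_lt (lt_shift β)),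
      defectKernel_of_gt hy hi (h.symm.trans_lt (lt_shift α)), defectKernel_add_add]
    simp [mul_assoc]
  · rw [if_neg h.ne', sub_mul, mul_assoc, ← defectKernel_of_gt hy hi h,
      ← defectKernel_of_gt hy hi (h.trans (lt_shift α)), sub_self]

end DefectKernel

theorem norm_defectKernel_le {A : Type*} [NormedRing A] (h1 : ‖(1 : A)‖ ≤ 1) {n : ℕ}
    {x y : Fin n → A} (hx : ∀ i, ‖x i‖ ≤ 1) (hy : ∀ i, ‖y i‖ ≤ 1) (l : List (Fin n))
    (α β : Fin n → ℕ) : ‖defectKernel x y l α β‖ ≤ ‖partialDefect x y l‖ := by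
  rw [defectKernel]
  split_ifs
  · refine (norm_mul₃_le ..).trans ?_
    refine (mul_le_of_le_one_right (by positivity) (norm_multiPow_le_one h1 hy _)).trans ?_
    exact mul_le_of_le_one_left (norm_nonneg _) (norm_multiPow_le_one h1 hx _)
  · simp

theorem defect_eq_partialDefect (X : Fin k → (H →L[ℂ] H)) :
    defect X = partialDefect X (fun i => adjoint (X i)) (List.finRange k) := by
  rw [defect, List.ofFn_eq_map]
  induction List.finRange k with
  | nil => rfl
  | cons i l ih =>
    simp only [List.map_cons, List.foldr_cons, Function.comp_apply, ih, partialDefect]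

section BlockEntry

variable {ι E : Type*} [NormedAddCommGroup E] [InnerProductSpace ℂ E]

/-- The operator `I ⊗ T` on `ℓ²(ι; E)`, acting as `T` in each coordinate. -/
def ampliation (ι : Type*) {E : Type*} [NormedAddCommGroup E] [InnerProductSpace ℂ E] :
    (E →L[ℂ] E) →* (ℓ²(ι, E) →L[ℂ] ℓ²(ι, E)) where
  toFun T := lp.mapCLM 2 (fun _ => T) (norm_nonneg T) fun _ => le_rfl
  map_one' := rfl
  map_mul' _ _ := rfl

theorem norm_ampliation_le (T : E →L[ℂ] E) : ‖ampliation ι T‖ ≤ ‖T‖ :=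
  lp.norm_mapCLM_le 2 (fun _ => T) (norm_nonneg T) fun _ => le_rfl

variable [DecidableEq ι]

/-- `S` is the weighted shift `δ_β h ↦ δ_{σ β} (T h)` on `ℓ²(ι; E)`: `Λ_i(T)` for
`σ β = β + e_i`, and `I ⊗ T` for `σ = id`. -/
def IsWeightedShift (σ : ι → ι) (T : E →L[ℂ] E) (S : ℓ²(ι, E) →L[ℂ] ℓ²(ι, E)) : Prop :=
  ∀ β h, S (lp.single 2 β h) = lp.single 2 (σ β) (T h)

/-- The `(α, β)` entry of an operator on `ℓ²(ι; E)`, viewed as a matrix of operators on `E`. -/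
def blockEntry (S : ℓ²(ι, E) →L[ℂ] ℓ²(ι, E)) (α β : ι) : E →L[ℂ] E :=
  lp.evalCLM ℂ (fun _ => E) 2 α ∘L S ∘L lp.singleContinuousLinearMap ℂ (fun _ => E) 2 β

theorem blockEntry_apply (S : ℓ²(ι, E) →L[ℂ] ℓ²(ι, E)) (α β : ι) (h : E) :
    blockEntry S α β h = S (lp.single 2 β h) α :=
  rfl

theorem inner_apply_single_single (S : ℓ²(ι, E) →L[ℂ] ℓ²(ι, E)) (α β : ι) (h m : E) :
    inner ℂ (S (lp.single 2 β h)) (lp.single 2 α m) = inner ℂ (blockEntry S α β h) m :=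
  lp.inner_single_right (𝕜 := ℂ) (G := fun _ : ι => E) α m (S (lp.single 2 β h))

theorem blockEntry_sub (S T : ℓ²(ι, E) →L[ℂ] ℓ²(ι, E)) (α β : ι) :
    blockEntry (S - T) α β = blockEntry S α β - blockEntry T α β :=
  rfl

theorem blockEntry_smul (c : ℂ) (S : ℓ²(ι, E) →L[ℂ] ℓ²(ι, E)) (α β : ι) :
    blockEntry (c • S) α β = c • blockEntry S α β :=
  rfl

theorem blockEntry_ext {S T : ℓ²(ι, E) →L[ℂ] ℓ²(ι, E)}
    (h : ∀ α β, blockEntry S α β = blockEntry T α β) : S = T := by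
  refine lp.ext_continuousLinearMap (by simp) fun β => ?_
  ext x α
  exact DFunLike.congr_fun (h α β) x

theorem norm_blockEntry_le (S : ℓ²(ι, E) →L[ℂ] ℓ²(ι, E)) (α β : ι) :
    ‖blockEntry S α β‖ ≤ ‖S‖ := by
  refine opNorm_le_bound _ (norm_nonneg S) fun h => ?_
  calc ‖blockEntry S α β h‖ ≤ ‖S (lp.single 2 β h)‖ :=
        lp.norm_apply_le_norm (E := fun _ : ι => E) two_ne_zero (S (lp.single 2 β h)) α
    _ ≤ ‖S‖ * ‖(lp.single 2 β h : ℓ²(ι, E))‖ := S.le_opNorm _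
    _ = ‖S‖ * ‖h‖ := by rw [lp.norm_single two_pos]

theorem isWeightedShift_ampliation (T : E →L[ℂ] E) : IsWeightedShift id T (ampliation ι T) := by
  intro β h
  ext α
  change T ((lp.single 2 β h : ℓ²(ι, E)) α) = _
  obtain rfl | hne := eq_or_ne α β <;> simp [*]

theorem blockEntry_ampliation (T : E →L[ℂ] E) (α β : ι) :
    blockEntry (ampliation ι T) α β = if α = β then T else 0 := by
  ext h
  rw [blockEntry_apply, isWeightedShift_ampliation T β h, id]
  obtain rfl | hne := eq_or_ne α β <;> simp [*]

theorem IsWeightedShift.unique {σ : ι → ι} {T : E →L[ℂ] E} {S S' : ℓ²(ι, E) →L[ℂ] ℓ²(ι, E)}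
    (hS : IsWeightedShift σ T S) (hS' : IsWeightedShift σ T S') : S = S' := by
  refine lp.ext_continuousLinearMap (by simp) fun β => ?_
  ext1 h
  exact (hS β h).trans (hS' β h).symm

theorem IsWeightedShift.commute {σ σ' : ι → ι} {S S' : ℓ²(ι, E) →L[ℂ] ℓ²(ι, E)}
    {T T' : E →L[ℂ] E} (hS : IsWeightedShift σ T S) (hS' : IsWeightedShift σ' T' S')
    (hσ : ∀ β, σ (σ' β) = σ' (σ β)) (hT : Commute T T') : Commute S S' := by
  refine lp.ext_continuousLinearMap (by simp) fun β => ?_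
  ext1 h
  have hTh : T (T' h) = T' (T h) := DFunLike.congr_fun hT.eq h
  simp [hS _ _, hS' _ _, hσ, hTh]

theorem IsWeightedShift.isUnit {T : E →L[ℂ] E} {S : ℓ²(ι, E) →L[ℂ] ℓ²(ι, E)}
    (hS : IsWeightedShift id T S) (hT : IsUnit T) : IsUnit S := by
  rw [hS.unique (isWeightedShift_ampliation T)]
  exact hT.map (ampliation ι)

variable [CompleteSpace E] {σ : ι → ι} {S : ℓ²(ι, E) →L[ℂ] ℓ²(ι, E)} {T : E →L[ℂ] E}

theorem IsWeightedShift.adjoint_mul_self (hS : IsWeightedShift σ T S) (hσ : σ.Injective) :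
    adjoint S * S = ampliation ι (adjoint T * T) := by
  refine blockEntry_ext fun α β => ?_
  ext h
  refine ext_inner_right ℂ fun m => ?_
  rw [← inner_apply_single_single, mul_apply_eq_comp, adjoint_inner_left, hS _ _, hS _ _,
    lp.inner_single_right, blockEntry_ampliation]
  obtain rfl | hne := eq_or_ne α β
  · simp [adjoint_inner_left]
  · simp [hne, hσ.ne hne]

theorem IsWeightedShift.norm_le (hS : IsWeightedShift σ T S) (hσ : σ.Injective) : ‖S‖ ≤ ‖T‖ := by
  refine le_of_sq_le_sq ?_ (norm_nonneg T)
  calc ‖S‖ ^ 2 = ‖adjoint S * S‖ := by rw [sq, ← norm_adjoint_comp_self]; rfl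
    _ ≤ ‖adjoint T * T‖ := by
      rw [hS.adjoint_mul_self hσ]; exact norm_ampliation_le _
    _ = ‖T‖ ^ 2 := by rw [sq, ← norm_adjoint_comp_self]; rfl

theorem IsWeightedShift.blockEntry_conj_one_sub {L : ℓ²(ι, E) →L[ℂ] ℓ²(ι, E)}
    (hL : IsWeightedShift σ T L) :
    blockEntry (adjoint (1 - L) * S * (1 - L)) =
      kernelDiff (adjoint T) T σ (blockEntry S) := by
  have one_sub_single (β : ι) (h : E) :
      (1 - L) (lp.single 2 β h) = lp.single 2 β h - lp.single 2 (σ β) (T h) := by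
    rw [sub_apply, one_apply_eq_self, hL _ _]
  ext α β h
  refine ext_inner_right ℂ fun m => ?_
  rw [← inner_apply_single_single, mul_apply_eq_comp, mul_apply_eq_comp, adjoint_inner_left,
    one_sub_single, one_sub_single]
  simp only [map_sub, inner_sub_left, inner_sub_right, inner_apply_single_single, kernelDiff,
    sub_apply, mul_apply_eq_comp, adjoint_inner_left]
  ring

end BlockEntry

section Factorization

variable {X : Fin k → (H →L[ℂ] H)} {L : Fin k → (L2 k H →L[ℂ] L2 k H)}

theorem isUnit_prod_one_sub {A : Type*} [NormedRing A] [HasSummableGeomSeries A] {n : ℕ}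
    {a : Fin n → A} (ha : ∀ i, ‖a i‖ < 1) : IsUnit (List.ofFn fun i => 1 - a i).prod := by
  refine (IsUnit.submonoid A).list_prod_mem fun b hb => ?_
  obtain ⟨i, rfl⟩ := (List.mem_ofFn' _ _).1 hb
  exact isUnit_one_sub_of_norm_lt_one (ha i)

theorem norm_lt_one_of_isWeightedShift (hX : ∀ i, ‖X i‖ < 1)
    (hL : ∀ i, IsWeightedShift (· + Pi.single i 1) (adjoint (X i)) (L i))
    (i : Fin k) : ‖L i‖ < 1 :=
  calc ‖L i‖ ≤ ‖adjoint (X i)‖ := (hL i).norm_le (add_left_injective _)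
    _ = ‖X i‖ := LinearIsometryEquiv.norm_map _ _
    _ < 1 := hX i

/-- Each difference operator is injective on bounded kernels, so the differences can be undone one
variable at a time. -/
theorem blockEntry_eq_of_conj_eq_defectKernel (hX : ∀ i j, Commute (X i) (X j))
    (hX1 : ∀ i, ‖X i‖ < 1)
    (hL : ∀ i, IsWeightedShift (· + Pi.single i 1) (adjoint (X i)) (L i))
    {S : L2 k H →L[ℂ] L2 k H} {l : List (Fin k)} (hl : l.Nodup)
    (hS : blockEntry (adjoint (l.map fun i => 1 - L i).prod * S * (l.map fun i => 1 - L i).prod) =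
      defectKernel X (fun i => adjoint (X i)) l) :
    blockEntry S = defectKernel X (fun i => adjoint (X i)) [] := by
  have hX' : ∀ i j, Commute (adjoint (X i)) (adjoint (X j)) := fun i j => (hX i j).star_star
  have hX1' : ∀ i, ‖adjoint (X i)‖ < 1 := fun i =>
    (LinearIsometryEquiv.norm_map adjoint (X i)).trans_lt (hX1 i)
  induction l with
  | nil => simpa [← star_eq_adjoint] using hS
  | cons i l ih =>
    obtain ⟨hi, hl⟩ := List.nodup_cons.1 hl
    refine ih hl (eq_of_kernelDiff_eq (hX1 i) (hX1' i) (τ := (· + Pi.single i 1))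
      (norm_blockEntry_le _) (norm_defectKernel_le norm_id_le (fun j => (hX1 j).le)
        (fun j => (hX1' j).le) l) ?_)
    have comm : Commute (1 - L i) (l.map fun i => 1 - L i).prod := by
      refine Commute.list_prod_right _ _ fun T hT => ?_
      obtain ⟨j, -, rfl⟩ := List.mem_map.1 hT
      exact ((Commute.one_left _).sub_left ((Commute.one_right _).sub_right
        ((hL i).commute (hL j) (fun β => add_right_comm β _ _) (hX' i j))))
    rw [kernelDiff_defectKernel hX hX' hi, ← hS, List.map_cons, List.prod_cons, comm.eq]
    have conj := (hL i).blockEntry_conj_one_sub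
      (S := adjoint (l.map fun i => 1 - L i).prod * S * (l.map fun i => 1 - L i).prod)
    rw [adjoint_adjoint] at conj
    rw [← conj]
    simp only [← star_eq_adjoint, star_mul, mul_assoc]

theorem isPoissonKernel_one_of_adjoint_prod_mul_mul_prod
    (hX : ∀ i j, Commute (X i) (X j)) (hX1 : ∀ i, ‖X i‖ < 1)
    (hL : ∀ i, IsWeightedShift (· + Pi.single i 1) (adjoint (X i)) (L i))
    {S : L2 k H →L[ℂ] L2 k H}
    (hS : adjoint (List.ofFn fun i => 1 - L i).prod * S * (List.ofFn fun i => 1 - L i).prod =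
      ampliation (Fin k → ℕ) (defect X)) : IsPoissonKernel X 1 S := by
  rw [List.ofFn_eq_map] at hS
  have entries := blockEntry_eq_of_conj_eq_defectKernel hX hX1 hL (List.nodup_finRange k)
    (S := S) <| by
      ext1 α; ext1 β
      rw [hS, blockEntry_ampliation, defectKernel_finRange, defect_eq_partialDefect]
  intro α β h m
  rw [inner_apply_single_single, entries, defectKernel_nil]
  simp [multiPow]

end Factorization

section CauchyFactor

variable {X : Fin k → (H →L[ℂ] H)} {D : H →L[ℂ] H} {L : Fin k → (L2 k H →L[ℂ] L2 k H)}
  {ID : L2 k H →L[ℂ] L2 k H}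

/-- The operator `C_X`, where `ID` stands for `I ⊗ Δ_X(I)^{1/2}` and `L i` for `Λ_i(X_i*)`. -/
abbrev cauchyFactor (ID : L2 k H →L[ℂ] L2 k H) (L : Fin k → (L2 k H →L[ℂ] L2 k H)) :
    L2 k H →L[ℂ] L2 k H :=
  ID * Ring.inverse (List.ofFn fun i => 1 - L i).prod

theorem isUnit_cauchyFactor (hX1 : ∀ i, ‖X i‖ < 1) (hunit : IsUnit (defect X))
    (hDD : D * D = defect X)
    (hL : ∀ i, IsWeightedShift (· + Pi.single i 1) (adjoint (X i)) (L i))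
    (hID : IsWeightedShift id D ID) : IsUnit (cauchyFactor ID L) := by
  have hD : IsUnit D := by rwa [← isUnit_pow_iff two_ne_zero, sq, hDD]
  have hW := isUnit_prod_one_sub (norm_lt_one_of_isWeightedShift hX1 hL)
  exact (hID.isUnit hD).mul hW.ringInverse

theorem isPoissonKernel_one_adjoint_cauchyFactor_mul_self
    (hX : ∀ i j, Commute (X i) (X j)) (hX1 : ∀ i, ‖X i‖ < 1)
    (hD : IsSelfAdjoint D) (hDD : D * D = defect X)
    (hL : ∀ i, IsWeightedShift (· + Pi.single i 1) (adjoint (X i)) (L i))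
    (hID : IsWeightedShift id D ID) :
    IsPoissonKernel X 1 (adjoint (cauchyFactor ID L) * cauchyFactor ID L) := by
  refine isPoissonKernel_one_of_adjoint_prod_mul_mul_prod hX hX1 hL ?_
  have hW := isUnit_prod_one_sub (norm_lt_one_of_isWeightedShift hX1 hL)
  set W := (List.ofFn fun i => 1 - L i).prod
  set C := cauchyFactor ID L
  have hCW : C * W = ID := by rw [mul_assoc, Ring.inverse_mul_cancel _ hW, mul_one]
  calc adjoint W * (adjoint C * C) * W = adjoint (C * W) * (C * W) := by
        simp only [← star_eq_adjoint, star_mul, mul_assoc]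
    _ = ampliation _ (adjoint D * D) := by rw [hCW, hID.adjoint_mul_self Function.injective_id]
    _ = ampliation _ (defect X) := by rw [hD.adjoint_eq, hDD]

end CauchyFactor

section PosKernel

variable {ι E : Type*} [NormedAddCommGroup E] [InnerProductSpace ℂ E]

/-- Positive semidefiniteness of an operator-valued kernel. -/
def IsPosKernel (K : ι → ι → E →L[ℂ] E) : Prop :=
  ∀ (s : Finset ι) (h : ι → E), 0 ≤ ∑ α ∈ s, ∑ β ∈ s, inner ℂ (K α β (h β)) (h α)

variable {K : ι → ι → E →L[ℂ] E}

theorem IsPosKernel.smul_of_hasSum (hK : IsPosKernel K) {κ : Type*} {w : ι → ι → ℝ} {c : κ → ℝ}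
    {u : κ → ι → ℝ} (hc : ∀ ζ, 0 ≤ c ζ)
    (hw : ∀ α β, HasSum (fun ζ => c ζ * (u ζ α * u ζ β)) (w α β)) :
    IsPosKernel fun α β => (w α β : ℂ) • K α β := by
  intro s h
  have form_eq (ζ : κ) : ∑ α ∈ s, ∑ β ∈ s, ((c ζ * (u ζ α * u ζ β) : ℝ) : ℂ) *
      inner ℂ (K α β (h β)) (h α) = (c ζ : ℂ) *
        ∑ α ∈ s, ∑ β ∈ s, inner ℂ (K α β ((u ζ β : ℂ) • h β)) ((u ζ α : ℂ) • h α) := by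
    simp only [Finset.mul_sum, map_smul, inner_smul_left, inner_smul_right, Complex.conj_ofReal]
    push_cast
    exact Finset.sum_congr rfl fun α _ => Finset.sum_congr rfl fun β _ => by ring
  have expand : HasSum (fun ζ => ∑ α ∈ s, ∑ β ∈ s, ((c ζ * (u ζ α * u ζ β) : ℝ) : ℂ) *
      inner ℂ (K α β (h β)) (h α))
      (∑ α ∈ s, ∑ β ∈ s, inner ℂ (((w α β : ℂ) • K α β) (h β)) (h α)) := by
    simp only [smul_apply, inner_smul_left, Complex.conj_ofReal]
    exact hasSum_sum fun α _ => hasSum_sum fun β _ =>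
      (Complex.hasSum_ofReal.2 (hw α β)).mul_right _
  refine expand.nonneg fun ζ => ?_
  rw [form_eq]
  exact mul_nonneg (Complex.zero_le_real.2 (hc ζ)) (hK s _)

theorem sum_range_mul_pow_tsub (r : ℝ) (a b : ℕ) {n : ℕ} (ha : n ≤ a) (hb : n ≤ b) :
    ∑ j ∈ Finset.range (n + 1), (if j = 0 then 1 else 1 - r ^ 2) * (r ^ (a - j) * r ^ (b - j)) =
      r ^ (a - n) * r ^ (b - n) := by
  induction n with
  | zero => simp
  | succ n ih =>
    rw [Finset.sum_range_succ, ih (by omega) (by omega), if_neg n.succ_ne_zero,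
      show a - n = a - (n + 1) + 1 by omega, show b - n = b - (n + 1) + 1 by omega]
    ring

theorem hasSum_pow_dist (r : ℝ) (a b : ℕ) :
    HasSum (fun j => (if j = 0 then 1 else 1 - r ^ 2) *
      ((if j ≤ a then r ^ (a - j) else 0) * (if j ≤ b then r ^ (b - j) else 0)))
      (r ^ ((a - b) + (b - a))) := by
  have sum_eq := sum_range_mul_pow_tsub r a b (min_le_left a b) (min_le_right a b)
  rw [← pow_add, show a - min a b + (b - min a b) = (a - b) + (b - a) by omega] at sum_eq
  have le_and_le {j : ℕ} : j ∈ Finset.range (min a b + 1) ↔ j ≤ a ∧ j ≤ b := by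
    rw [Finset.mem_range_succ_iff, le_min_iff]
  have truncate (j : ℕ) (hj : j ∈ Finset.range (min a b + 1)) :
      (if j = 0 then 1 else 1 - r ^ 2) *
        ((if j ≤ a then r ^ (a - j) else 0) * (if j ≤ b then r ^ (b - j) else 0)) =
      (if j = 0 then 1 else 1 - r ^ 2) * (r ^ (a - j) * r ^ (b - j)) := by
    rw [if_pos (le_and_le.1 hj).1, if_pos (le_and_le.1 hj).2]
  rw [← sum_eq, ← Finset.sum_congr rfl truncate]
  refine hasSum_sum_of_ne_finset_zero fun j hj => ?_
  rw [le_and_le, not_and_or] at hj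
  obtain hj | hj := hj <;> simp [hj]

variable {r : ℝ}

theorem IsPosKernel.pow_dist_smul (hK : IsPosKernel K) (hr0 : 0 ≤ r) (hr1 : r ≤ 1) (f : ι → ℕ) :
    IsPosKernel fun α β => ((r ^ ((f α - f β) + (f β - f α)) : ℝ) : ℂ) • K α β := by
  refine hK.smul_of_hasSum (fun j => ?_) fun α β => hasSum_pow_dist r (f α) (f β)
  split_ifs
  exacts [zero_le_one, sub_nonneg.2 (pow_le_one₀ hr0 hr1)]

theorem IsPosKernel.pow_sum_dist_smul (hK : IsPosKernel K) (hr0 : 0 ≤ r) (hr1 : r ≤ 1)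
    {κ : Type*} (s : Finset κ) (f : κ → ι → ℕ) :
    IsPosKernel fun α β => ((r ^ (∑ i ∈ s, ((f i α - f i β) + (f i β - f i α))) : ℝ) : ℂ) •
      K α β := by
  classical
  induction s using Finset.induction_on with
  | empty => simpa using hK
  | insert i s hi ih =>
    simpa [Finset.sum_insert hi, pow_add, mul_smul] using ih.pow_dist_smul hr0 hr1 (f i)

theorem isPosKernel_iff_forall_pow_smul {κ : Type*} (s : Finset κ) (f : κ → ι → ℕ) :
    IsPosKernel K ↔ ∀ r ∈ Set.Ico (0 : ℝ) 1, IsPosKernel fun α β =>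
      ((r ^ (∑ i ∈ s, ((f i α - f i β) + (f i β - f i α))) : ℝ) : ℂ) • K α β := by
  refine ⟨fun hK r hr => hK.pow_sum_dist_smul hr.1 hr.2.le s f, fun hK t h => ?_⟩
  set form : ℝ → ℂ := fun r => ∑ α ∈ t, ∑ β ∈ t, inner ℂ
    ((((r ^ (∑ i ∈ s, ((f i α - f i β) + (f i β - f i α))) : ℝ) : ℂ) • K α β) (h β)) (h α)
  have lim : Tendsto form (𝓝[<] 1) (𝓝 (form 1)) := by
    refine Continuous.continuousWithinAt ?_
    fun_prop
  have form_one : form 1 = ∑ α ∈ t, ∑ β ∈ t, inner ℂ (K α β (h β)) (h α) := by simp [form]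
  rw [← form_one]
  refine ge_of_tendsto lim ?_
  filter_upwards [Ico_mem_nhdsLT one_pos] with r hr using hK r hr t h

end PosKernel

section PosOperator

variable {ι E : Type*} [NormedAddCommGroup E] [InnerProductSpace ℂ E]

theorem isPositive_iff_inner_nonneg (T : E →L[ℂ] E) :
    T.IsPositive ↔ ∀ x, 0 ≤ inner ℂ (T x) x := by
  refine ⟨IsPositive.inner_nonneg_left, fun h => (isPositive_iff_complex T).2 fun x => ?_⟩
  exact ⟨(Complex.eq_re_of_ofReal_le (h x)).symm, (Complex.nonneg_iff.1 (h x)).1⟩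

variable [DecidableEq ι]

theorem isPositive_iff_isPosKernel_blockEntry (S : ℓ²(ι, E) →L[ℂ] ℓ²(ι, E)) :
    S.IsPositive ↔ IsPosKernel (blockEntry S) := by
  have form_eq (s : Finset ι) (h : ι → E) :
      inner ℂ (S (∑ β ∈ s, lp.single 2 β (h β))) (∑ α ∈ s, lp.single 2 α (h α)) =
        ∑ α ∈ s, ∑ β ∈ s, inner ℂ (blockEntry S α β (h β)) (h α) := by
    simp only [map_sum, sum_inner, inner_sum, inner_apply_single_single]
  rw [isPositive_iff_inner_nonneg]
  refine ⟨fun hS s h => form_eq s h ▸ hS _, fun hS x => ?_⟩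
  have hx : HasSum (fun α => lp.single 2 α (x α)) x := lp.hasSum_single ENNReal.ofNat_ne_top x
  refine ge_of_tendsto' (((S.continuous.tendsto x).comp hx).inner hx) fun s => ?_
  exact (form_eq s x).symm ▸ hS s x

end PosOperator

section CStarAlgebra

variable {A : Type*} [CStarAlgebra A] {s t : A}

theorem norm_mul_inverse_le_iff [PartialOrder A] [StarOrderedRing A] (ht : IsUnit t) {c : ℝ}
    (hc : 0 ≤ c) : ‖s * Ring.inverse t‖ ≤ c ↔ star s * s ≤ c ^ 2 • (star t * t) := by
  set u := s * Ring.inverse t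
  have hs : s = u * t := by rw [mul_assoc, Ring.inverse_mul_cancel _ ht, mul_one]
  have conj : c ^ 2 • (star t * t) - star s * s =
      star t * (algebraMap ℝ A (c ^ 2) - star u * u) * t := by
    rw [hs, star_mul, Algebra.algebraMap_eq_smul_one]
    simp only [mul_sub, sub_mul, mul_smul_comm, smul_mul_assoc, mul_one, mul_assoc]
  rw [← sq_le_sq₀ (norm_nonneg u) hc, sq ‖u‖, ← CStarRing.norm_star_mul_self,
    CStarAlgebra.norm_le_iff_le_algebraMap _ (sq_nonneg c) (star_mul_self_nonneg u),
    ← sub_nonneg, ← ht.star_left_conjugate_nonneg_iff, ← conj, sub_nonneg]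

theorem log_max_one_norm_mul_inverse (hs : IsUnit s) (ht : IsUnit t) :
    Real.log (max 1 (max ‖s * Ring.inverse t‖ ‖t * Ring.inverse s‖)) =
      Real.log (max ‖s * Ring.inverse t‖ ‖t * Ring.inverse s‖) := by
  obtain _ | _ := subsingleton_or_nontrivial A
  · simp [Subsingleton.elim _ (0 : A)]
  · set M := max ‖s * Ring.inverse t‖ ‖t * Ring.inverse s‖
    have hM : 0 ≤ M := (norm_nonneg _).trans (le_max_left _ _)
    have mul_eq_one : s * Ring.inverse t * (t * Ring.inverse s) = 1 := by
      rw [mul_assoc, ← mul_assoc _ t, Ring.inverse_mul_cancel _ ht, one_mul,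
        Ring.mul_inverse_cancel _ hs]
    have one_le : 1 ≤ M * M :=
      calc 1 = ‖s * Ring.inverse t * (t * Ring.inverse s)‖ := by rw [mul_eq_one, CStarRing.norm_one]
        _ ≤ ‖s * Ring.inverse t‖ * ‖t * Ring.inverse s‖ := norm_mul_le _ _
        _ ≤ M * M := mul_le_mul (le_max_left _ _) (le_max_right _ _) (norm_nonneg _) hM
    rw [max_eq_right (by nlinarith)]

end CStarAlgebra

theorem inv_smul_le_iff_of_rclike_pos {𝕜 M : Type*} [RCLike 𝕜] [AddCommMonoid M] [Module 𝕜 M]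
    [Preorder M] [PosSMulMono 𝕜 M] {c : 𝕜} (hc : 0 < c) {a b : M} : c⁻¹ • a ≤ b ↔ a ≤ c • b := by
  refine ⟨fun h => ?_, fun h => ?_⟩
  · simpa only [smul_inv_smul₀ hc.ne'] using smul_le_smul_of_nonneg_left h hc.le
  · simpa only [inv_smul_smul₀ hc.ne'] using
      smul_le_smul_of_nonneg_left h (RCLike.inv_pos_of_pos hc).le

section PoissonDistance

variable {X A B : Fin k → (H →L[ℂ] H)} {PA PB : ℝ → (L2 k H →L[ℂ] L2 k H)}

theorem IsPoissonKernel.blockEntry_eq {r : ℝ} {P S : L2 k H →L[ℂ] L2 k H}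
    (hP : IsPoissonKernel X r P) (hS : IsPoissonKernel X 1 S) (α β : Fin k → ℕ) :
    blockEntry P α β = ((r ^ (∑ i, ((α i - β i) + (β i - α i))) : ℝ) : ℂ) • blockEntry S α β := by
  ext h
  refine ext_inner_right ℂ fun m => ?_
  rw [smul_apply, inner_smul_left, Complex.conj_ofReal, ← inner_apply_single_single,
    ← inner_apply_single_single, hP, hS]
  simp

theorem opLE_iff_le {E : Type*} [NormedAddCommGroup E] [InnerProductSpace ℂ E] [CompleteSpace E]
    {S T : E →L[ℂ] E} : opLE S T ↔ S ≤ T :=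
  Iff.rfl

theorem forall_le_smul_iff {SA SB : L2 k H →L[ℂ] L2 k H}
    (hPA : ∀ r ∈ Set.Ico (0 : ℝ) 1, IsPoissonKernel A r (PA r)) (hSA : IsPoissonKernel A 1 SA)
    (hPB : ∀ r ∈ Set.Ico (0 : ℝ) 1, IsPoissonKernel B r (PB r)) (hSB : IsPoissonKernel B 1 SB)
    (c : ℂ) : (∀ r ∈ Set.Ico (0 : ℝ) 1, PA r ≤ c • PB r) ↔ SA ≤ c • SB := by
  simp only [ContinuousLinearMap.le_def, isPositive_iff_isPosKernel_blockEntry]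
  rw [isPosKernel_iff_forall_pow_smul Finset.univ fun i α => α i]
  refine forall₂_congr fun r hr => iff_of_eq (congrArg IsPosKernel ?_)
  ext1 α; ext1 β
  simp only [blockEntry_sub, blockEntry_smul, (hPA r hr).blockEntry_eq hSA,
    (hPB r hr).blockEntry_eq hSB, smul_sub, smul_comm c]

theorem poissonSandwich_iff_norm_le {CA CB : L2 k H →L[ℂ] L2 k H}
    (hPA : ∀ r ∈ Set.Ico (0 : ℝ) 1, IsPoissonKernel A r (PA r))
    (hPB : ∀ r ∈ Set.Ico (0 : ℝ) 1, IsPoissonKernel B r (PB r))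
    (hSA : IsPoissonKernel A 1 (adjoint CA * CA)) (hSB : IsPoissonKernel B 1 (adjoint CB * CB))
    (hCA : IsUnit CA) (hCB : IsUnit CB) {c : ℝ} (hc : 0 < c) :
    PoissonSandwich PA PB c ↔ max ‖CA * Ring.inverse CB‖ ‖CB * Ring.inverse CA‖ ≤ c := by
  have hc2 : (0 : ℂ) < (c : ℂ) ^ 2 := by exact_mod_cast pow_pos hc 2
  have norm_le_iff {S T : L2 k H →L[ℂ] L2 k H} (hT : IsUnit T) :
      ‖S * Ring.inverse T‖ ≤ c ↔ adjoint S * S ≤ (c : ℂ) ^ 2 • (adjoint T * T) := by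
    rw [norm_mul_inverse_le_iff hT hc.le, ← Complex.ofReal_pow, Complex.coe_smul]
    rfl
  simp only [PoissonSandwich, opLE_iff_le, inv_smul_le_iff_of_rclike_pos hc2, forall_and]
  rw [forall_le_smul_iff hPA hSA hPB hSB, forall_le_smul_iff hPB hSB hPA hSA, max_le_iff,
    norm_le_iff hCB, norm_le_iff hCA, and_comm]

theorem poissonEquiv_and_deltaP_eq {M : ℝ}
    (h : ∀ c, 1 ≤ c → (PoissonSandwich PA PB c ↔ M ≤ c)) :
    PoissonEquiv PA PB ∧ deltaP PA PB = Real.log (max 1 M) := by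
  have admissible : {c : ℝ | 1 ≤ c ∧ PoissonSandwich PA PB c} = Set.Ici (max 1 M) := by
    ext c
    rw [Set.mem_ofPred_eq, and_congr_right (h c), Set.mem_Ici, max_le_iff]
  refine ⟨⟨max 1 M, le_max_left _ _, (h _ (le_max_left _ _)).2 (le_max_right _ _)⟩, ?_⟩
  rw [deltaP, admissible, csInf_Ici]

end PoissonDistance

/-- For `A, B ∈ D^k(H)`, `A` and `B` are Poisson equivalent and
`δ_P(A,B) = ln max {‖C_A C_B⁻¹‖, ‖C_B C_A⁻¹‖}`, where
`C_X = (I ⊗ Δ_X(I)^{1/2}) ∘ ∏ (I - Λ_i(X_i*))⁻¹`.  Here `D_X` denotes the positive square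
root of `Δ_X(I)`, `L_X i` the operator `Λ_i(X_i*)` on `ℓ²(ℕ^k; H)`, and `ID_X` the operator
`I ⊗ D_X` acting entrywise. -/
theorem stmt_10 (hk : 1 ≤ k) (A B : Fin k → (H →L[ℂ] H))
    (hA : memPolydisk A) (hB : memPolydisk B)
    (DA DB : H →L[ℂ] H)
    (hDA : DA.IsPositive ∧ DA * DA = defect A)
    (hDB : DB.IsPositive ∧ DB * DB = defect B)
    (LA LB : Fin k → (L2 k H →L[ℂ] L2 k H))
    (hLA : ∀ (i : Fin k) (α : Fin k → ℕ) (h : H),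
      LA i (lp.single 2 α h) = lp.single 2 (α + Pi.single i 1) (adjoint (A i) h))
    (hLB : ∀ (i : Fin k) (α : Fin k → ℕ) (h : H),
      LB i (lp.single 2 α h) = lp.single 2 (α + Pi.single i 1) (adjoint (B i) h))
    (IDA IDB : L2 k H →L[ℂ] L2 k H)
    (hIDA : ∀ (α : Fin k → ℕ) (h : H), IDA (lp.single 2 α h) = lp.single 2 α (DA h))
    (hIDB : ∀ (α : Fin k → ℕ) (h : H), IDB (lp.single 2 α h) = lp.single 2 α (DB h))
    (PA PB : ℝ → (L2 k H →L[ℂ] L2 k H))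
    (hPA : ∀ r ∈ Set.Ico (0 : ℝ) 1, IsPoissonKernel A r (PA r))
    (hPB : ∀ r ∈ Set.Ico (0 : ℝ) 1, IsPoissonKernel B r (PB r)) :
    PoissonEquiv PA PB ∧
      deltaP PA PB =
        Real.log (max
          ‖(IDA * Ring.inverse ((List.ofFn fun i => 1 - LA i).prod)) *
            Ring.inverse (IDB * Ring.inverse ((List.ofFn fun i => 1 - LB i).prod))‖
          ‖(IDB * Ring.inverse ((List.ofFn fun i => 1 - LB i).prod)) *
            Ring.inverse (IDA * Ring.inverse ((List.ofFn fun i => 1 - LA i).prod))‖) := by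
  obtain ⟨hAcomm, hAnorm, -, hAunit⟩ := hA
  obtain ⟨hBcomm, hBnorm, -, hBunit⟩ := hB
  have hCA : IsUnit (cauchyFactor IDA LA) := isUnit_cauchyFactor hAnorm hAunit hDA.2 hLA hIDA
  have hCB : IsUnit (cauchyFactor IDB LB) := isUnit_cauchyFactor hBnorm hBunit hDB.2 hLB hIDB
  have hSA := isPoissonKernel_one_adjoint_cauchyFactor_mul_self hAcomm hAnorm
    hDA.1.isSelfAdjoint hDA.2 hLA hIDA
  have hSB := isPoissonKernel_one_adjoint_cauchyFactor_mul_self hBcomm hBnorm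
    hDB.1.isSelfAdjoint hDB.2 hLB hIDB
  rw [← log_max_one_norm_mul_inverse hCA hCB]
  exact poissonEquiv_and_deltaP_eq fun c hc =>
    poissonSandwich_iff_norm_le hPA hPB hSA hSB hCA hCB (one_pos.trans_le hc)

end
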